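/- Assume L/2 ≥ M ≥ r. Fix subsets S, S′ ⊆ {1,…,M}; for M+1 ≤ l ≤ L+1 let Y_l = (x_l, (x_{l−s})_{s∈S}) and Y′_l = (x_l, (x_{l−s})_{s∈S′}); let ν and ν′ denote the marginals of the stationary window distribution μ̄ corresponding to Y and Y′ respectively, and assume ν is entrywise positive. Define the averaged joint distribution p̂(E, E′) = (L−M)^{−1} Σ_{l=M+1}^{L} p(Y_{L+1} = E, Y′_l = E′) for E ∈ 𝒳^{1+|S|}, E′ ∈ 𝒳^{1+|S′|}. Then ‖ p̂ − ν ⊗ ν′ ‖_TV ≤ 2M/L + 4√(D₀+1) / ( L(1−λ)·√(min_E ν(E)) ). -/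

import Mathlib

open Finset

/-- Probability of the full sequence `x` (tokens indexed `0,…,T-1`, i.e. `x_1,…,x_T`)
under the `n`-gram Markov chain with parent offsets `r`, transition kernel `pk`,
and initial distribution `init` on the first `R` tokens. -/
noncomputable def ngramProb (d n R T : ℕ) (r : Fin n → ℕ)
    (pk : (Fin n → Fin d) → Fin d → ℝ) (init : (Fin R → Fin d) → ℝ)
    (hRT : R ≤ T) (x : Fin T → Fin d) : ℝ :=
  init (fun i => x ⟨i.1, lt_of_lt_of_le i.2 hRT⟩) *
    ∏ l ∈ (Finset.Ico R T).attach,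
      pk (fun k => x ⟨l.1 - r k, lt_of_le_of_lt (Nat.sub_le _ _) (Finset.mem_Ico.mp l.2).2⟩)
        (x ⟨l.1, (Finset.mem_Ico.mp l.2).2⟩)

/-- The window transition matrix `P_π` on `𝒳^R` of the `n`-gram chain:
`P(Z', Z) = π(z'_R | Z parents) · 1{Z' is the shift of Z}`. -/
noncomputable def windowMatrix (d n R : ℕ) (hR : 0 < R) (r : Fin n → ℕ)
    (hrpos : ∀ k, 0 < r k) (pk : (Fin n → Fin d) → Fin d → ℝ) :
    Matrix (Fin R → Fin d) (Fin R → Fin d) ℝ :=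
  Matrix.of fun Z' Z =>
    if ∀ j : Fin (R - 1),
        Z' ⟨j.1, lt_of_lt_of_le j.2 (Nat.sub_le R 1)⟩ = Z ⟨j.1 + 1, by have := j.2; omega⟩ then
      pk (fun k => Z ⟨R - r k, Nat.sub_lt hR (hrpos k)⟩) (Z' ⟨R - 1, Nat.sub_lt hR Nat.one_pos⟩)
    else 0

/-- The matrix `K - √μ (√μ)ᵀ` where `K = diag(√μ)⁻¹ P_π diag(√μ)`. -/
noncomputable def specA (d n R : ℕ) (hR : 0 < R) (r : Fin n → ℕ) (hrpos : ∀ k, 0 < r k)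
    (pk : (Fin n → Fin d) → Fin d → ℝ) (μ : (Fin R → Fin d) → ℝ) :
    Matrix (Fin R → Fin d) (Fin R → Fin d) ℝ :=
  (Matrix.diagonal fun Z => (Real.sqrt (μ Z))⁻¹) * windowMatrix d n R hR r hrpos pk *
      (Matrix.diagonal fun Z => Real.sqrt (μ Z)) -
    Matrix.vecMulVec (fun Z => Real.sqrt (μ Z)) (fun Z => Real.sqrt (μ Z))

/-- The tuple `(x_{l0-s})_{s ∈ S}` of tokens at offsets `S` before position `l0` (0-based). -/
def parents (d T : ℕ) (S : Finset ℕ) (x : Fin T → Fin d) (l0 : ℕ) (hl : l0 < T) :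
    {s // s ∈ S} → Fin d :=
  fun s => x ⟨l0 - s.1, lt_of_le_of_lt (Nat.sub_le _ _) hl⟩

/-- The window `Y_{l0} = (x_{l0}, (x_{l0-s})_{s ∈ S})` (0-based position `l0`). -/
def window (d T : ℕ) (S : Finset ℕ) (x : Fin T → Fin d) (l0 : ℕ) (hl : l0 < T) :
    Fin d × ({s // s ∈ S} → Fin d) :=
  (x ⟨l0, hl⟩, parents d T S x l0 hl)

/-- The law of the window `Y_{l0}` when the full sequence is distributed as `q`. -/
noncomputable def windowLaw (d T : ℕ) (S : Finset ℕ) (q : (Fin T → Fin d) → ℝ)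
    (l0 : ℕ) (hl : l0 < T) (w : Fin d × ({s // s ∈ S} → Fin d)) : ℝ :=
  ∑ x : Fin T → Fin d, if window d T S x l0 hl = w then q x else 0

/-- Total variation distance: half the ℓ₁ distance. -/
noncomputable def tvDist {α : Type*} [Fintype α] (p q : α → ℝ) : ℝ :=
  (∑ w, |p w - q w|) / 2

/-- χ²-divergence `D_{χ²}(p ‖ q) = Σ_ω (p ω - q ω)² / q ω`. -/
noncomputable def chiSq {α : Type*} [Fintype α] (p q : α → ℝ) : ℝ :=
  ∑ w, (p w - q w) ^ 2 / q w

theorem icoLtSucc {M L : ℕ} (l : {m // m ∈ Finset.Ico M L}) : l.1 < L + 1 :=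
  Nat.lt_succ_of_lt (Finset.mem_Ico.mp l.2).2

/-! ### One-step and multi-step operators on functions of token sequences -/

noncomputable def stepU {d n : ℕ} (r : Fin n → ℕ) (pk : (Fin n → Fin d) → Fin d → ℝ) (t : ℕ)
    (F : (ℕ → Fin d) → ℝ) : (ℕ → Fin d) → ℝ :=
  fun x => ∑ e, pk (fun k => x (t - r k)) e * F (Function.update x t e)

noncomputable def iterW {d n : ℕ} (r : Fin n → ℕ) (pk : (Fin n → Fin d) → Fin d → ℝ) :
    ℕ → ℕ → ((ℕ → Fin d) → ℝ) → ((ℕ → Fin d) → ℝ)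
  | 0, _, F => F
  | k + 1, t, F => stepU r pk t (iterW r pk k (t + 1) F)

def extN {d : ℕ} (hd : 0 < d) {T : ℕ} (x : Fin T → Fin d) : ℕ → Fin d :=
  fun i => if h : i < T then x ⟨i, h⟩ else ⟨0, hd⟩

def wN {d : ℕ} (S : Finset ℕ) (x : ℕ → Fin d) (l : ℕ) : Fin d × ({s // s ∈ S} → Fin d) :=
  (x l, fun s => x (l - s.1))

def stN {d : ℕ} (R t : ℕ) (x : ℕ → Fin d) : Fin R → Fin d := fun i => x (t - R + i.1)

def shN {d : ℕ} (s : ℕ) (x : ℕ → Fin d) : ℕ → Fin d := fun i => x (i + s)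

theorem window_eq {d : ℕ} (hd : 0 < d) (T : ℕ) (S : Finset ℕ) (x : Fin T → Fin d) (l : ℕ)
    (hl : l < T) : window d T S x l hl = wN S (extN hd x) l := by
  unfold window wN parents extN
  ext1
  · simp [hl]
  · funext s
    have : l - s.1 < T := by omega
    simp [this]

theorem iterW_succ_right {d n : ℕ} (r : Fin n → ℕ) (pk : (Fin n → Fin d) → Fin d → ℝ)
    (k t : ℕ) (F : (ℕ → Fin d) → ℝ) :
    iterW r pk (k + 1) t F = iterW r pk k t (stepU r pk (t + k) F) := by
  induction k generalizing t with
  | zero => simp [iterW]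
  | succ k ih =>
    rw [iterW, ih, iterW]
    congr 3
    omega

theorem iterW_add {d n : ℕ} (r : Fin n → ℕ) (pk : (Fin n → Fin d) → Fin d → ℝ)
    (j k t : ℕ) (F : (ℕ → Fin d) → ℝ) :
    iterW r pk (j + k) t F = iterW r pk j t (iterW r pk k (t + j) F) := by
  induction j generalizing t with
  | zero => simp [iterW]
  | succ j ih =>
    rw [show j + 1 + k = (j + k) + 1 by omega, iterW, ih, iterW]
    congr 3
    omega

theorem iterW_mono {d n : ℕ} (r : Fin n → ℕ) (pk : (Fin n → Fin d) → Fin d → ℝ)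
    (hpk0 : ∀ Y e, 0 ≤ pk Y e) (k t : ℕ) (F G : (ℕ → Fin d) → ℝ) (h : ∀ x, F x ≤ G x) :
    ∀ x, iterW r pk k t F x ≤ iterW r pk k t G x := by
  induction k generalizing t with
  | zero => exact h
  | succ k ih =>
    intro x
    simp only [iterW, stepU]
    exact Finset.sum_le_sum fun e _ => mul_le_mul_of_nonneg_left (ih _ _) (hpk0 _ _)

theorem iterW_sum {d n : ℕ} (r : Fin n → ℕ) (pk : (Fin n → Fin d) → Fin d → ℝ)
    {ι : Type*} (s : Finset ι) (k t : ℕ) (F : ι → (ℕ → Fin d) → ℝ) (x : ℕ → Fin d) :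
    iterW r pk k t (fun x => ∑ i ∈ s, F i x) x = ∑ i ∈ s, iterW r pk k t (F i) x := by
  induction k generalizing t x with
  | zero => rfl
  | succ k ih =>
    simp only [iterW, stepU]
    rw [Finset.sum_comm]
    refine Finset.sum_congr rfl fun e _ => ?_
    rw [ih, Finset.mul_sum]

/-- pulling out a factor that does not depend on the coordinates `≥ t` -/
theorem iterW_mul {d n : ℕ} (r : Fin n → ℕ) (pk : (Fin n → Fin d) → Fin d → ℝ)
    (k t : ℕ) (F G : (ℕ → Fin d) → ℝ) (hF : ∀ x y, (∀ i < t, x i = y i) → F x = F y)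
    (x : ℕ → Fin d) :
    iterW r pk k t (fun x => F x * G x) x = F x * iterW r pk k t G x := by
  induction k generalizing t x with
  | zero => rfl
  | succ k ih =>
    simp only [iterW, stepU]
    rw [Finset.mul_sum]
    refine Finset.sum_congr rfl fun e _ => ?_
    rw [ih (t + 1) (fun x y h => hF x y fun i hi => h i (by omega))]
    rw [hF (Function.update x t e) x
      (fun i hi => by rw [Function.update_of_ne (by omega)])]
    ring

theorem iterW_const {d n : ℕ} (r : Fin n → ℕ) (pk : (Fin n → Fin d) → Fin d → ℝ)
    (hpk1 : ∀ Y, ∑ e, pk Y e = 1) (k t : ℕ) (c : ℝ) (x : ℕ → Fin d) :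
    iterW r pk k t (fun _ => c) x = c := by
  induction k generalizing t x with
  | zero => rfl
  | succ k ih =>
    simp only [iterW, stepU, ih]
    rw [← Finset.sum_mul, hpk1, one_mul]

theorem iterW_sub {d n : ℕ} (r : Fin n → ℕ) (pk : (Fin n → Fin d) → Fin d → ℝ)
    (k t : ℕ) (F G : (ℕ → Fin d) → ℝ) (x : ℕ → Fin d) :
    iterW r pk k t (fun x => F x - G x) x = iterW r pk k t F x - iterW r pk k t G x := by
  induction k generalizing t x with
  | zero => rfl
  | succ k ih =>
    simp only [iterW, stepU]
    rw [← Finset.sum_sub_distrib]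
    refine Finset.sum_congr rfl fun e _ => ?_
    rw [ih]; ring

theorem iterW_local {d n : ℕ} (r : Fin n → ℕ) (hrpos : ∀ i, 0 < r i)
    (pk : (Fin n → Fin d) → Fin d → ℝ)
    (k t : ℕ) (ht : 0 < t) (F : (ℕ → Fin d) → ℝ)
    (hF : ∀ x y, (∀ i < t + k, x i = y i) → F x = F y) (x y : ℕ → Fin d)
    (h : ∀ i < t, x i = y i) :
    iterW r pk k t F x = iterW r pk k t F y := by
  induction k generalizing t x y with
  | zero => exact hF x y h
  | succ k ih =>
    simp only [iterW, stepU]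
    refine Finset.sum_congr rfl fun e _ => ?_
    congr 1
    · congr 1
      funext j
      exact h _ (by have := hrpos j; omega)
    · refine ih (t + 1) (by omega) (fun x y h => hF x y fun i hi => h i (by omega)) _ _ ?_
      intro i hi
      by_cases hit : i = t
      · subst hit; simp
      · rw [Function.update_of_ne hit, Function.update_of_ne hit]; exact h i (by omega)

theorem iterW_shift {d n R : ℕ} (r : Fin n → ℕ) (hrR : ∀ i, r i ≤ R)
    (pk : (Fin n → Fin d) → Fin d → ℝ)
    (k t s : ℕ) (ht : R ≤ t) (F : (ℕ → Fin d) → ℝ) (x : ℕ → Fin d) :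
    iterW r pk k (t + s) (fun x => F (shN s x)) x = iterW r pk k t F (shN s x) := by
  induction k generalizing t x with
  | zero => rfl
  | succ k ih =>
    simp only [iterW, stepU]
    refine Finset.sum_congr rfl fun e _ => ?_
    rw [show t + s + 1 = t + 1 + s by omega, ih (t + 1) (by omega)]
    congr 1
    · congr 1
      funext j
      unfold shN
      congr 1
      have := hrR j; omega
    · congr 1
      funext i
      unfold shN
      by_cases hit : i = t
      · subst hit; simp
      · rw [Function.update_of_ne hit, Function.update_of_ne (by omega)]

noncomputable def backQ {Ω : Type*} [Fintype Ω] (P : Matrix Ω Ω ℝ) (f : Ω → ℝ) : Ω → ℝ :=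
  fun Z => ∑ Z', P Z' Z * f Z'

noncomputable def fwdP {Ω : Type*} [Fintype Ω] (P : Matrix Ω Ω ℝ) (η : Ω → ℝ) : Ω → ℝ :=
  fun Z' => ∑ Z, P Z' Z * η Z

theorem backQ_window (d n R : ℕ) (hR : 0 < R) (r : Fin n → ℕ) (hrpos : ∀ k, 0 < r k)
    (pk : (Fin n → Fin d) → Fin d → ℝ) (f : (Fin R → Fin d) → ℝ) (Z : Fin R → Fin d) :
    backQ (windowMatrix d n R hR r hrpos pk) f Z =
      ∑ e, pk (fun k => Z ⟨R - r k, Nat.sub_lt hR (hrpos k)⟩) e *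
        f (fun i => if h : i.1 + 1 < R then Z ⟨i.1 + 1, h⟩ else e) := by
  unfold backQ windowMatrix
  simp only [Matrix.of_apply, ite_mul, zero_mul]
  rw [← Finset.sum_filter]
  refine Finset.sum_nbij' (fun Z' => Z' ⟨R - 1, Nat.sub_lt hR Nat.one_pos⟩)
    (fun e i => if h : i.1 + 1 < R then Z ⟨i.1 + 1, h⟩ else e) ?_ ?_ ?_ ?_ ?_
  · intro Z' _; simp
  · intro e _
    simp only [Finset.mem_filter, Finset.mem_univ, true_and]
    intro j
    have : j.1 + 1 < R := by have := j.2; omega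
    simp [this]
  · intro Z' hZ'
    simp only [Finset.mem_filter, Finset.mem_univ, true_and] at hZ'
    funext i
    by_cases h : i.1 + 1 < R
    · simp only [h, dif_pos]
      exact (hZ' ⟨i.1, by omega⟩).symm
    · simp only [h, dif_neg, not_false_eq_true]
      congr 1
      ext
      simp; omega
  · intro e _
    have : ¬ (R - 1 + 1 < R) := by omega
    simp [this]
  · intro Z' hZ'
    simp only [Finset.mem_filter, Finset.mem_univ, true_and] at hZ'
    congr 2
    funext i
    by_cases h : i.1 + 1 < R
    · simp only [h, dif_pos]
      exact (hZ' ⟨i.1, by omega⟩)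
    · simp only [h, dif_neg, not_false_eq_true]
      congr 1
      ext
      simp; omega

theorem stepU_state (d n R : ℕ) (hR : 0 < R) (r : Fin n → ℕ) (hrpos : ∀ k, 0 < r k)
    (hrR : ∀ i, r i ≤ R)
    (pk : (Fin n → Fin d) → Fin d → ℝ) (f : (Fin R → Fin d) → ℝ) (t : ℕ) (ht : R ≤ t)
    (x : ℕ → Fin d) :
    stepU r pk t (fun x => f (stN R (t + 1) x)) x =
      backQ (windowMatrix d n R hR r hrpos pk) f (stN R t x) := by
  rw [backQ_window]
  unfold stepU
  refine Finset.sum_congr rfl fun e _ => ?_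
  congr 1
  · congr 1
    funext k
    unfold stN
    congr 1
    have := hrR k
    simp only; omega
  · show f _ = f _
    congr 1
    funext i
    unfold stN
    by_cases h : i.1 + 1 < R
    · simp only [h, dif_pos]
      rw [Function.update_of_ne (by omega)]
      congr 1; omega
    · simp only [h, dif_neg, not_false_eq_true]
      rw [show t + 1 - R + i.1 = t by have := i.2; omega]
      simp

theorem iterW_state (d n R : ℕ) (hR : 0 < R) (r : Fin n → ℕ) (hrpos : ∀ k, 0 < r k)
    (hrR : ∀ i, r i ≤ R)
    (pk : (Fin n → Fin d) → Fin d → ℝ) (f : (Fin R → Fin d) → ℝ) (k t : ℕ) (ht : R ≤ t)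
    (x : ℕ → Fin d) :
    iterW r pk k t (fun x => f (stN R (t + k) x)) x =
      (backQ (windowMatrix d n R hR r hrpos pk))^[k] f (stN R t x) := by
  induction k generalizing t x with
  | zero => rfl
  | succ k ih =>
    rw [Function.iterate_succ_apply']
    rw [← stepU_state d n R hR r hrpos hrR pk _ t ht x, iterW]
    congr 1
    funext y
    rw [← ih (t + 1) (by omega)]
    rw [show t + (k + 1) = t + 1 + k by omega]

theorem stN_extN {d : ℕ} (hd : 0 < d) (R : ℕ) (z : Fin R → Fin d) : stN R R (extN hd z) = z := by
  funext i
  simp [stN, extN]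

theorem ngram_expect {d n R : ℕ} (hd : 0 < d) (hR : 0 < R) (r : Fin n → ℕ)
    (hrpos : ∀ i, 0 < r i)
    (pk : (Fin n → Fin d) → Fin d → ℝ) (init : (Fin R → Fin d) → ℝ) (k : ℕ)
    (F : (ℕ → Fin d) → ℝ) :
    ∀ (T : ℕ) (hRT : R ≤ T), T = R + k →
    ∑ x : Fin T → Fin d, ngramProb d n R T r pk init hRT x * F (extN hd x) =
      ∑ z, init z * iterW r pk k R F (extN hd z) := by
  induction k generalizing F with
  | zero =>
    intro T hRT hT
    obtain rfl : T = R := hT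
    refine Finset.sum_congr rfl fun z _ => ?_
    unfold ngramProb
    rw [Finset.prod_eq_one]
    · simp [iterW]
    · rintro ⟨l, hl⟩ _
      simp at hl
  | succ k ih =>
    intro T hRT hT
    obtain ⟨T, rfl⟩ : ∃ T', T = T' + 1 := ⟨R + k, by omega⟩
    rw [iterW_succ_right, ← ih (stepU r pk (R + k) F) T (by omega) (by omega)]
    rw [← (Fin.snocEquiv (fun _ : Fin (T + 1) => Fin d)).sum_comp]
    rw [Fintype.sum_prod_type, Finset.sum_comm]
    refine Finset.sum_congr rfl fun x _ => ?_
    unfold stepU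
    rw [Finset.mul_sum]
    refine Finset.sum_congr rfl fun e _ => ?_
    obtain rfl : T = R + k := by omega
    have hext : extN hd ((Fin.snocEquiv fun _ : Fin (R + k + 1) => Fin d) (e, x)) =
        Function.update (extN hd x) (R + k) e := by
      funext i
      simp only [Fin.snocEquiv, Equiv.coe_fn_mk]
      by_cases h : i = R + k
      · subst h
        simp [Fin.snoc, extN]
      · rw [Function.update_of_ne h]
        by_cases h2 : i < R + k
        · simp [Fin.snoc, extN, h2, show i < R + k + 1 by omega]
        · simp [extN, h2, show ¬ i < R + k + 1 by omega]
    rw [hext]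
    rw [← mul_assoc]
    congr 1
    have key : ∀ (T : ℕ) (h : R ≤ T) (y : Fin T → Fin d), ngramProb d n R T r pk init h y =
        init (fun i => extN hd y i) * ∏ l ∈ Finset.Ico R T,
          pk (fun j => extN hd y (l - r j)) (extN hd y l) := by
      intro T h y
      unfold ngramProb
      congr 1
      · congr 1
        funext i
        simp [extN, lt_of_lt_of_le i.2 h]
      · rw [← Finset.prod_attach (Finset.Ico R T)]
        refine Finset.prod_congr rfl fun l _ => ?_
        have hl : l.1 < T := (Finset.mem_Ico.mp l.2).2
        congr 1
        · funext j
          simp [extN, show l.1 - r j < T by omega]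
        · simp [extN, hl]
    rw [key, key, hext, Finset.prod_Ico_succ_top (by omega), ← mul_assoc]
    congr 1
    · congr 1
      · congr 1
        funext i
        rw [Function.update_of_ne (by have := i.2; omega)]
      · refine Finset.prod_congr rfl fun l hl => ?_
        rw [Finset.mem_Ico] at hl
        congr 1
        · funext j
          rw [Function.update_of_ne (by omega)]
        · rw [Function.update_of_ne (by omega)]
    · congr 1
      · funext j
        rw [Function.update_of_ne (by have := hrpos j; omega)]
      · simp

/-! ### Weighted `ℓ²` contraction -/

noncomputable def absA {Ω : Type*} [Fintype Ω] [DecidableEq Ω] (P : Matrix Ω Ω ℝ) (μ : Ω → ℝ) :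
    Matrix Ω Ω ℝ :=
  (Matrix.diagonal fun Z => (Real.sqrt (μ Z))⁻¹) * P *
      (Matrix.diagonal fun Z => Real.sqrt (μ Z)) -
    Matrix.vecMulVec (fun Z => Real.sqrt (μ Z)) (fun Z => Real.sqrt (μ Z))

theorem absA_apply {Ω : Type*} [Fintype Ω] [DecidableEq Ω] (P : Matrix Ω Ω ℝ) (μ : Ω → ℝ)
    (Z' Z : Ω) : absA P μ Z' Z =
      (Real.sqrt (μ Z'))⁻¹ * P Z' Z * Real.sqrt (μ Z) - Real.sqrt (μ Z') * Real.sqrt (μ Z) := by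
  simp [absA, Matrix.vecMulVec_apply]

theorem hop_sq {Ω : Type*} [Fintype Ω] (A : Matrix Ω Ω ℝ) (lam : ℝ)
    (hop : ∀ v : Ω → ℝ, Real.sqrt (∑ Z', Matrix.mulVec A v Z' ^ 2)
        ≤ lam * Real.sqrt (∑ Z, v Z ^ 2)) (v : Ω → ℝ) :
    ∑ Z', Matrix.mulVec A v Z' ^ 2 ≤ lam ^ 2 * ∑ Z, v Z ^ 2 := by
  have h := hop v
  have h1 : 0 ≤ ∑ Z', Matrix.mulVec A v Z' ^ 2 := Finset.sum_nonneg fun _ _ => sq_nonneg _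
  have h2 : 0 ≤ ∑ Z, v Z ^ 2 := Finset.sum_nonneg fun _ _ => sq_nonneg _
  have h3 := pow_le_pow_left₀ (Real.sqrt_nonneg _) h 2
  rwa [mul_pow, Real.sq_sqrt h1, Real.sq_sqrt h2] at h3

theorem hop_sq_transpose {Ω : Type*} [Fintype Ω] (A : Matrix Ω Ω ℝ) (lam : ℝ)
    (h : ∀ v : Ω → ℝ, ∑ Z', Matrix.mulVec A v Z' ^ 2 ≤ lam ^ 2 * ∑ Z, v Z ^ 2) (w : Ω → ℝ) :
    ∑ Z, (∑ Z', A Z' Z * w Z') ^ 2 ≤ lam ^ 2 * ∑ Z, w Z ^ 2 := by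
  set u : Ω → ℝ := fun Z => ∑ Z', A Z' Z * w Z' with hu
  have hU : ∑ Z, u Z ^ 2 = ∑ Z', Matrix.mulVec A u Z' * w Z' := by
    simp only [Matrix.mulVec, dotProduct, Finset.sum_mul]
    rw [Finset.sum_comm]
    refine Finset.sum_congr rfl fun Z _ => ?_
    rw [sq]
    conv_lhs => rw [hu]
    simp only [Finset.sum_mul]
    refine Finset.sum_congr rfl fun Z' _ => ?_
    rw [hu]; ring
  have hcs := Finset.sum_mul_sq_le_sq_mul_sq Finset.univ (fun Z' => Matrix.mulVec A u Z') w
  rw [← hU] at hcs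
  have h1 := h u
  have hw : 0 ≤ ∑ Z, w Z ^ 2 := Finset.sum_nonneg fun _ _ => sq_nonneg _
  have hu0 : 0 ≤ ∑ Z, u Z ^ 2 := Finset.sum_nonneg fun _ _ => sq_nonneg _
  have h2 := mul_le_mul_of_nonneg_right h1 hw
  rcases hu0.eq_or_lt with h0 | h0
  · have : 0 ≤ lam ^ 2 * ∑ Z, w Z ^ 2 := by positivity
    show ∑ Z, u Z ^ 2 ≤ _
    linarith
  · show ∑ Z, u Z ^ 2 ≤ _
    refine le_of_mul_le_mul_left ?_ h0
    nlinarith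

structure Setup {Ω : Type*} [Fintype Ω] [DecidableEq Ω] (P : Matrix Ω Ω ℝ) (μ : Ω → ℝ)
    (lam : ℝ) : Prop where
  pos : ∀ Z, 0 < μ Z
  one : ∑ Z, μ Z = 1
  stat : fwdP P μ = μ
  col : ∀ Z, ∑ Z', P Z' Z = 1
  lam0 : 0 ≤ lam
  lam1 : lam < 1
  hop : ∀ v : Ω → ℝ, ∑ Z', Matrix.mulVec (absA P μ) v Z' ^ 2 ≤ lam ^ 2 * ∑ Z, v Z ^ 2

theorem fwd_step {Ω : Type*} [Fintype Ω] [DecidableEq Ω] {P : Matrix Ω Ω ℝ} {μ : Ω → ℝ}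
    {lam : ℝ} (hs : Setup P μ lam) (η : Ω → ℝ) (hη : ∑ Z, η Z = 0) :
    ∑ Z, fwdP P η Z ^ 2 / μ Z ≤ lam ^ 2 * ∑ Z, η Z ^ 2 / μ Z := by
  have h := hs.hop (fun Z => η Z / Real.sqrt (μ Z))
  have h1 : ∀ Z', Matrix.mulVec (absA P μ) (fun Z => η Z / Real.sqrt (μ Z)) Z' ^ 2 =
      fwdP P η Z' ^ 2 / μ Z' := by
    intro Z'
    have : Matrix.mulVec (absA P μ) (fun Z => η Z / Real.sqrt (μ Z)) Z' =
        fwdP P η Z' / Real.sqrt (μ Z') - Real.sqrt (μ Z') * ∑ Z, η Z := by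
      simp only [Matrix.mulVec, dotProduct, fwdP]
      rw [Finset.sum_div, Finset.mul_sum, ← Finset.sum_sub_distrib]
      refine Finset.sum_congr rfl fun Z _ => ?_
      rw [absA_apply]
      have := (Real.sqrt_pos.mpr (hs.pos Z)).ne'
      have := (Real.sqrt_pos.mpr (hs.pos Z')).ne'
      field_simp
    rw [this, hη, mul_zero, sub_zero, div_pow, Real.sq_sqrt (hs.pos Z').le]
  have h2 : ∀ Z, (η Z / Real.sqrt (μ Z)) ^ 2 = η Z ^ 2 / μ Z := by
    intro Z
    rw [div_pow, Real.sq_sqrt (hs.pos Z).le]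
  simpa only [h1, h2] using h

theorem back_step {Ω : Type*} [Fintype Ω] [DecidableEq Ω] {P : Matrix Ω Ω ℝ} {μ : Ω → ℝ}
    {lam : ℝ} (hs : Setup P μ lam) (f : Ω → ℝ) (hf : ∑ Z, μ Z * f Z = 0) :
    ∑ Z, μ Z * backQ P f Z ^ 2 ≤ lam ^ 2 * ∑ Z, μ Z * f Z ^ 2 := by
  have h := hop_sq_transpose (absA P μ) lam hs.hop (fun Z => Real.sqrt (μ Z) * f Z)
  have h1 : ∀ Z, (∑ Z', absA P μ Z' Z * (Real.sqrt (μ Z') * f Z')) ^ 2 =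
      μ Z * backQ P f Z ^ 2 := by
    intro Z
    have : ∑ Z', absA P μ Z' Z * (Real.sqrt (μ Z') * f Z') =
        Real.sqrt (μ Z) * backQ P f Z - Real.sqrt (μ Z) * ∑ Z', μ Z' * f Z' := by
      simp only [backQ]
      rw [Finset.mul_sum, Finset.mul_sum, ← Finset.sum_sub_distrib]
      refine Finset.sum_congr rfl fun Z' _ => ?_
      rw [absA_apply]
      have h0 := (Real.sqrt_pos.mpr (hs.pos Z')).ne'
      have h3 := Real.mul_self_sqrt (hs.pos Z').le
      rw [sub_mul]
      congr 1
      · field_simp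
      · rw [← h3]
        simp only [Real.sqrt_mul_self (Real.sqrt_nonneg _)]
        ring
    rw [this, hf, mul_zero, sub_zero, mul_pow, Real.sq_sqrt (hs.pos Z).le]
  have h2 : ∀ Z, (Real.sqrt (μ Z) * f Z) ^ 2 = μ Z * f Z ^ 2 := by
    intro Z
    rw [mul_pow, Real.sq_sqrt (hs.pos Z).le]
  simpa only [h1, h2] using h

theorem duality {Ω : Type*} [Fintype Ω] (P : Matrix Ω Ω ℝ) (k : ℕ) (q f : Ω → ℝ) :
    ∑ Z, q Z * (backQ P)^[k] f Z = ∑ Z, (fwdP P)^[k] q Z * f Z := by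
  induction k generalizing q with
  | zero => rfl
  | succ k ih =>
    rw [Function.iterate_succ_apply (fwdP P), ← ih, Function.iterate_succ_apply']
    set g := (backQ P)^[k] f
    simp only [backQ, fwdP, Finset.mul_sum, Finset.sum_mul]
    rw [Finset.sum_comm]
    refine Finset.sum_congr rfl fun Z _ => Finset.sum_congr rfl fun Z' _ => ?_
    ring

theorem fwd_sum {Ω : Type*} [Fintype Ω] (P : Matrix Ω Ω ℝ) (hcol : ∀ Z, ∑ Z', P Z' Z = 1)
    (k : ℕ) (q : Ω → ℝ) : ∑ Z, (fwdP P)^[k] q Z = ∑ Z, q Z := by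
  induction k with
  | zero => rfl
  | succ k ih =>
    rw [Function.iterate_succ_apply', ← ih]
    set g := (fwdP P)^[k] q
    simp only [fwdP]
    rw [Finset.sum_comm]
    refine Finset.sum_congr rfl fun Z _ => ?_
    rw [← Finset.sum_mul, hcol, one_mul]

theorem fwd_sub {Ω : Type*} [Fintype Ω] (P : Matrix Ω Ω ℝ) (k : ℕ) (p q : Ω → ℝ) :
    (fwdP P)^[k] (fun Z => p Z - q Z) = fun Z => (fwdP P)^[k] p Z - (fwdP P)^[k] q Z := by
  induction k with
  | zero => rfl
  | succ k ih =>
    simp only [Function.iterate_succ_apply', ih]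
    funext Z
    simp only [fwdP, ← Finset.sum_sub_distrib, mul_sub]

theorem back_sub_const {Ω : Type*} [Fintype Ω] (P : Matrix Ω Ω ℝ)
    (hcol : ∀ Z, ∑ Z', P Z' Z = 1) (k : ℕ) (f : Ω → ℝ) (c : ℝ) :
    (backQ P)^[k] (fun Z => f Z - c) = fun Z => (backQ P)^[k] f Z - c := by
  induction k with
  | zero => rfl
  | succ k ih =>
    simp only [Function.iterate_succ_apply', ih]
    funext Z
    simp only [backQ, mul_sub, Finset.sum_sub_distrib, ← Finset.sum_mul, hcol, one_mul]

theorem fwd_stat {Ω : Type*} [Fintype Ω] {P : Matrix Ω Ω ℝ} {μ : Ω → ℝ}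
    (h : fwdP P μ = μ) (k : ℕ) : (fwdP P)^[k] μ = μ :=
  Function.iterate_fixed h k

theorem fwd_iter {Ω : Type*} [Fintype Ω] [DecidableEq Ω] {P : Matrix Ω Ω ℝ} {μ : Ω → ℝ}
    {lam : ℝ} (hs : Setup P μ lam) (k : ℕ) (η : Ω → ℝ) (hη : ∑ Z, η Z = 0) :
    ∑ Z, (fwdP P)^[k] η Z ^ 2 / μ Z ≤ (lam ^ k) ^ 2 * ∑ Z, η Z ^ 2 / μ Z := by
  induction k with
  | zero => simp
  | succ k ih =>
    rw [Function.iterate_succ_apply']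
    refine (fwd_step hs _ (by rw [fwd_sum P hs.col, hη])).trans ?_
    refine (mul_le_mul_of_nonneg_left ih (sq_nonneg lam)).trans (le_of_eq ?_)
    ring

theorem back_iter {Ω : Type*} [Fintype Ω] [DecidableEq Ω] {P : Matrix Ω Ω ℝ} {μ : Ω → ℝ}
    {lam : ℝ} (hs : Setup P μ lam) (k : ℕ) (f : Ω → ℝ) (hf : ∑ Z, μ Z * f Z = 0) :
    ∑ Z, μ Z * (backQ P)^[k] f Z ^ 2 ≤ (lam ^ k) ^ 2 * ∑ Z, μ Z * f Z ^ 2 := by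
  induction k with
  | zero => simp
  | succ k ih =>
    rw [Function.iterate_succ_apply']
    refine (back_step hs _ (by rw [duality, fwd_stat hs.stat, hf])).trans ?_
    refine (mul_le_mul_of_nonneg_left ih (sq_nonneg lam)).trans (le_of_eq ?_)
    ring

theorem chiSq_nonneg {Ω : Type*} [Fintype Ω] (p μ : Ω → ℝ) (h : ∀ Z, 0 < μ Z) :
    0 ≤ chiSq p μ :=
  Finset.sum_nonneg fun Z _ => div_nonneg (sq_nonneg _) (h Z).le

theorem chi_iter {Ω : Type*} [Fintype Ω] [DecidableEq Ω] {P : Matrix Ω Ω ℝ} {μ : Ω → ℝ}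
    {lam : ℝ} (hs : Setup P μ lam) (k : ℕ) (p : Ω → ℝ) (hp : ∑ Z, p Z = 1) :
    chiSq ((fwdP P)^[k] p) μ ≤ (lam ^ k) ^ 2 * chiSq p μ := by
  have h := fwd_iter hs k (fun Z => p Z - μ Z) (by rw [Finset.sum_sub_distrib, hp, hs.one, sub_self])
  rw [fwd_sub, fwd_stat hs.stat] at h
  exact h

theorem l1_le {Ω : Type*} [Fintype Ω] [DecidableEq Ω] {P : Matrix Ω Ω ℝ} {μ : Ω → ℝ}
    {lam : ℝ} (hs : Setup P μ lam) (k : ℕ) (p : Ω → ℝ) (hp : ∑ Z, p Z = 1) :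
    ∑ Z, |(fwdP P)^[k] p Z - μ Z| ≤ lam ^ k * Real.sqrt (chiSq p μ + 1) := by
  have hcs := Finset.sum_sq_le_sum_mul_sum_of_sq_le_mul Finset.univ
    (r := fun Z => |(fwdP P)^[k] p Z - μ Z|)
    (f := fun Z => ((fwdP P)^[k] p Z - μ Z) ^ 2 / μ Z) (g := μ)
    (fun Z _ => div_nonneg (sq_nonneg _) (hs.pos Z).le) (fun Z _ => (hs.pos Z).le)
    (fun Z _ => le_of_eq (by rw [sq_abs, div_mul_cancel₀ _ (hs.pos Z).ne']))
  rw [hs.one, mul_one] at hcs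
  have hl : 0 ≤ lam ^ k := pow_nonneg hs.lam0 k
  refine abs_le_of_sq_le_sq' ?_ (by positivity) |>.2
  rw [mul_pow, Real.sq_sqrt (by have := chiSq_nonneg p μ hs.pos; linarith)]
  refine hcs.trans ((chi_iter hs k p hp).trans ?_)
  exact mul_le_mul_of_nonneg_left (by linarith) (by positivity)

theorem corr_le {Ω : Type*} [Fintype Ω] [DecidableEq Ω] {P : Matrix Ω Ω ℝ} {μ : Ω → ℝ}
    {lam : ℝ} (hs : Setup P μ lam) (j k : ℕ) (p : Ω → ℝ) (hp : ∑ Z, p Z = 1)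
    (f : Ω → ℝ) (hf : ∑ Z, μ Z * f Z = 0) :
    ∑ Z, (fwdP P)^[j] p Z * |(backQ P)^[k] f Z| ≤
      Real.sqrt (chiSq p μ + 1) * lam ^ k * Real.sqrt (∑ Z, μ Z * f Z ^ 2) := by
  set q := (fwdP P)^[j] p with hq
  have hcs := Finset.sum_sq_le_sum_mul_sum_of_sq_le_mul Finset.univ
    (r := fun Z => q Z * |(backQ P)^[k] f Z|)
    (f := fun Z => q Z ^ 2 / μ Z) (g := fun Z => μ Z * (backQ P)^[k] f Z ^ 2)
    (fun Z _ => div_nonneg (sq_nonneg _) (hs.pos Z).le)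
    (fun Z _ => mul_nonneg (hs.pos Z).le (sq_nonneg _))
    (fun Z _ => by
      have := (hs.pos Z).ne'
      rw [mul_pow, sq_abs]; refine le_of_eq ?_; field_simp)
  have hl : 0 ≤ lam ^ k := pow_nonneg hs.lam0 k
  have hD := chiSq_nonneg p μ hs.pos
  have hq1 : ∑ Z, q Z = 1 := by rw [hq, fwd_sum P hs.col, hp]
  have hq2 : ∑ Z, q Z ^ 2 / μ Z ≤ chiSq p μ + 1 := by
    have e : ∑ Z, q Z ^ 2 / μ Z = chiSq q μ + 1 := by
      have : ∀ Z, q Z ^ 2 / μ Z = (q Z - μ Z) ^ 2 / μ Z + (2 * q Z - μ Z) := by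
        intro Z
        have := (hs.pos Z).ne'
        field_simp
        ring
      rw [Finset.sum_congr rfl fun Z _ => this Z, Finset.sum_add_distrib,
        Finset.sum_sub_distrib, ← Finset.mul_sum, hq1, hs.one, chiSq]
      norm_num
    have h1 := chi_iter hs j p hp
    rw [← hq] at h1
    have h2 : (lam ^ j) ^ 2 ≤ 1 :=
      pow_le_one₀ (pow_nonneg hs.lam0 j) (pow_le_one₀ hs.lam0 hs.lam1.le)
    have h3 := mul_le_mul_of_nonneg_right h2 hD
    linarith
  have hm : 0 ≤ ∑ Z, μ Z * f Z ^ 2 :=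
    Finset.sum_nonneg fun Z _ => mul_nonneg (hs.pos Z).le (sq_nonneg _)
  refine abs_le_of_sq_le_sq' ?_ (by positivity) |>.2
  rw [mul_pow, mul_pow, Real.sq_sqrt (by linarith), Real.sq_sqrt hm, mul_assoc]
  refine hcs.trans ?_
  exact mul_le_mul hq2 (back_iter hs k f hf)
    (Finset.sum_nonneg fun Z _ => mul_nonneg (hs.pos Z).le (sq_nonneg _)) (by linarith)

/-! ### Windows -/

noncomputable def indW {d : ℕ} (S : Finset ℕ) (l : ℕ) (E : Fin d × ({s // s ∈ S} → Fin d))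
    (x : ℕ → Fin d) : ℝ := if wN S x l = E then 1 else 0

theorem indW_nonneg {d : ℕ} (S : Finset ℕ) (l : ℕ) (E : Fin d × ({s // s ∈ S} → Fin d))
    (x : ℕ → Fin d) : 0 ≤ indW S l E x := by
  unfold indW; split_ifs <;> norm_num

theorem indW_sum {d : ℕ} (S : Finset ℕ) (l : ℕ) (x : ℕ → Fin d) :
    ∑ E, indW S l E x = 1 := by
  simp [indW]

theorem indW_local {d : ℕ} (S : Finset ℕ) (l : ℕ) (E : Fin d × ({s // s ∈ S} → Fin d))
    (x y : ℕ → Fin d) (h : ∀ i < l + 1, x i = y i) : indW S l E x = indW S l E y := by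
  have : wN S x l = wN S y l := by
    unfold wN
    ext1
    · exact h l (by omega)
    · funext s
      exact h _ (by omega)
  unfold indW
  rw [this]

theorem indW_shift {d M : ℕ} (S : Finset ℕ) (hS : ∀ s ∈ S, 1 ≤ s ∧ s ≤ M) (s : ℕ)
    (E : Fin d × ({s // s ∈ S} → Fin d)) :
    indW S (M + s) E = fun x => indW S M E (shN s x) := by
  funext x
  have : wN S x (M + s) = wN S (shN s x) M := by
    unfold wN shN
    ext1
    · rfl
    · funext i
      have := (hS i.1 i.2).2
      show x _ = x _
      congr 1; omega
  unfold indW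
  rw [this]

noncomputable def fE {d n : ℕ} (hd : 0 < d) (r : Fin n → ℕ) (pk : (Fin n → Fin d) → Fin d → ℝ)
    (R M : ℕ) (S : Finset ℕ) (E : Fin d × ({s // s ∈ S} → Fin d)) (z : Fin R → Fin d) : ℝ :=
  iterW r pk (M + 1 - R) R (indW S M E) (extN hd z)

theorem fE_nonneg {d n : ℕ} (hd : 0 < d) (r : Fin n → ℕ) (pk : (Fin n → Fin d) → Fin d → ℝ)
    (hpk0 : ∀ Y e, 0 ≤ pk Y e) (hpk1 : ∀ Y, ∑ e, pk Y e = 1)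
    (R M : ℕ) (S : Finset ℕ) (E : Fin d × ({s // s ∈ S} → Fin d)) (z : Fin R → Fin d) :
    0 ≤ fE hd r pk R M S E z := by
  have := iterW_mono r pk hpk0 (M + 1 - R) R (fun _ => 0) (indW S M E) (indW_nonneg S M E)
    (extN hd z)
  rwa [iterW_const r pk hpk1] at this

theorem fE_sum {d n : ℕ} (hd : 0 < d) (r : Fin n → ℕ) (pk : (Fin n → Fin d) → Fin d → ℝ)
    (hpk1 : ∀ Y, ∑ e, pk Y e = 1)
    (R M : ℕ) (S : Finset ℕ) (z : Fin R → Fin d) :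
    ∑ E, fE hd r pk R M S E z = 1 := by
  unfold fE
  rw [← iterW_sum]
  simp only [indW_sum]
  exact iterW_const r pk hpk1 _ _ _ _

theorem fE_le_one {d n : ℕ} (hd : 0 < d) (r : Fin n → ℕ) (pk : (Fin n → Fin d) → Fin d → ℝ)
    (hpk0 : ∀ Y e, 0 ≤ pk Y e) (hpk1 : ∀ Y, ∑ e, pk Y e = 1)
    (R M : ℕ) (S : Finset ℕ) (E : Fin d × ({s // s ∈ S} → Fin d)) (z : Fin R → Fin d) :
    fE hd r pk R M S E z ≤ 1 := by
  rw [← fE_sum hd r pk hpk1 R M S z]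
  exact Finset.single_le_sum (f := fun E => fE hd r pk R M S E z)
    (fun E _ => fE_nonneg hd r pk hpk0 hpk1 R M S E z) (Finset.mem_univ E)

theorem windowLaw_eq {d n R M : ℕ} (hd : 0 < d) (hR : 0 < R) (r : Fin n → ℕ)
    (hrpos : ∀ i, 0 < r i)
    (pk : (Fin n → Fin d) → Fin d → ℝ) (init : (Fin R → Fin d) → ℝ) (hRM : R ≤ M + 1)
    (S : Finset ℕ) (E : Fin d × ({s // s ∈ S} → Fin d)) :
    windowLaw d (M + 1) S (ngramProb d n R (M + 1) r pk init hRM) M (Nat.lt_succ_self M) E =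
      ∑ z, init z * fE hd r pk R M S E z := by
  unfold fE
  rw [← ngram_expect hd hR r hrpos pk init (M + 1 - R) (indW S M E) (M + 1) hRM (by omega)]
  unfold windowLaw
  refine Finset.sum_congr rfl fun x _ => ?_
  rw [window_eq hd]
  unfold indW
  split_ifs <;> simp

theorem iterW_ind {d n R M : ℕ} (hd : 0 < d) (hR : 0 < R) (r : Fin n → ℕ)
    (hrpos : ∀ i, 0 < r i) (hrR : ∀ i, r i ≤ R)
    (pk : (Fin n → Fin d) → Fin d → ℝ) (hRM : R ≤ M)
    (S : Finset ℕ) (hS : ∀ s ∈ S, 1 ≤ s ∧ s ≤ M) (E : Fin d × ({s // s ∈ S} → Fin d))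
    (t k N l : ℕ) (ht : R ≤ t) (hl : l + R = M + t + k) (hN : N = k + (M + 1 - R))
    (x : ℕ → Fin d) :
    iterW r pk N t (indW S l E) x =
      (backQ (windowMatrix d n R hR r hrpos pk))^[k] (fE hd r pk R M S E) (stN R t x) := by
  rw [hN, iterW_add, ← iterW_state d n R hR r hrpos hrR pk _ k t ht x]
  congr 1
  funext y
  obtain ⟨s, hs⟩ : ∃ s, t + k = R + s := ⟨t + k - R, by omega⟩
  obtain rfl : l = M + s := by omega
  rw [hs, indW_shift S hS, iterW_shift r hrR pk _ R s le_rfl]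
  unfold fE
  apply iterW_local r hrpos pk _ R hR
  · intro x y h
    exact indW_local S M E x y fun i hi => h i (by omega)
  · intro i hi
    simp only [shN, extN, hi, dif_pos, stN]
    congr 1; omega

/-- the joint law -/
noncomputable def jnt {d n : ℕ} (hd : 0 < d) (r : Fin n → ℕ) (pk : (Fin n → Fin d) → Fin d → ℝ)
    (R L : ℕ) (μ0 : (Fin R → Fin d) → ℝ) (S S' : Finset ℕ) (l : ℕ)
    (w : (Fin d × ({s // s ∈ S} → Fin d)) × (Fin d × ({s // s ∈ S'} → Fin d))) : ℝ :=
  ∑ z, μ0 z * iterW r pk (L + 1 - R) R (fun x => indW S' l w.2 x * indW S L w.1 x) (extN hd z)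

theorem jnt_eq {d n R L : ℕ} (hd : 0 < d) (hR : 0 < R) (r : Fin n → ℕ)
    (hrpos : ∀ i, 0 < r i) (pk : (Fin n → Fin d) → Fin d → ℝ) (μ0 : (Fin R → Fin d) → ℝ)
    (hRL : R ≤ L + 1) (S S' : Finset ℕ) (l : ℕ) (hl : l < L + 1)
    (w : (Fin d × ({s // s ∈ S} → Fin d)) × (Fin d × ({s // s ∈ S'} → Fin d))) :
    (∑ x : Fin (L + 1) → Fin d,
                if window d (L + 1) S x L (Nat.lt_succ_self L) = w.1 ∧
                    window d (L + 1) S' x l hl = w.2 then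
                  ngramProb d n R (L + 1) r pk μ0 hRL x
                else 0) = jnt hd r pk R L μ0 S S' l w := by
  unfold jnt
  rw [← ngram_expect hd hR r hrpos pk μ0 (L + 1 - R) _ (L + 1) hRL (by omega)]
  refine Finset.sum_congr rfl fun x _ => ?_
  rw [window_eq hd, window_eq hd]
  unfold indW
  by_cases h1 : wN S (extN hd x) L = w.1 <;> by_cases h2 : wN S' (extN hd x) l = w.2 <;>
    simp [h1, h2]

theorem jnt_nonneg {d n : ℕ} (hd : 0 < d) (r : Fin n → ℕ) (pk : (Fin n → Fin d) → Fin d → ℝ)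
    (hpk0 : ∀ Y e, 0 ≤ pk Y e) (hpk1 : ∀ Y, ∑ e, pk Y e = 1)
    (R L : ℕ) (μ0 : (Fin R → Fin d) → ℝ) (hμ00 : ∀ Z, 0 ≤ μ0 Z) (S S' : Finset ℕ) (l : ℕ)
    (w : (Fin d × ({s // s ∈ S} → Fin d)) × (Fin d × ({s // s ∈ S'} → Fin d))) :
    0 ≤ jnt hd r pk R L μ0 S S' l w := by
  refine Finset.sum_nonneg fun z _ => mul_nonneg (hμ00 z) ?_
  have := iterW_mono r pk hpk0 (L + 1 - R) R (fun _ => 0)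
    (fun x => indW S' l w.2 x * indW S L w.1 x)
    (fun x => mul_nonneg (indW_nonneg _ _ _ _) (indW_nonneg _ _ _ _)) (extN hd z)
  rwa [iterW_const r pk hpk1] at this

theorem jnt_sum {d n : ℕ} (hd : 0 < d) (r : Fin n → ℕ) (pk : (Fin n → Fin d) → Fin d → ℝ)
    (hpk1 : ∀ Y, ∑ e, pk Y e = 1)
    (R L : ℕ) (μ0 : (Fin R → Fin d) → ℝ) (hμ01 : ∑ Z, μ0 Z = 1) (S S' : Finset ℕ) (l : ℕ) :
    ∑ w, jnt hd r pk R L μ0 S S' l w = 1 := by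
  unfold jnt
  rw [Finset.sum_comm, ← hμ01]
  refine Finset.sum_congr rfl fun z _ => ?_
  rw [← Finset.mul_sum, ← iterW_sum]
  have : ∀ x : ℕ → Fin d, ∑ w : (Fin d × ({s // s ∈ S} → Fin d)) × (Fin d × ({s // s ∈ S'} → Fin d)),
      indW S' l w.2 x * indW S L w.1 x = 1 := by
    intro x
    rw [Fintype.sum_prod_type]
    simp only [← Finset.sum_mul, indW_sum, one_mul]
  simp only [this]
  rw [iterW_const r pk hpk1, mul_one]

theorem jnt_split {d n R M L : ℕ} (hd : 0 < d) (hR : 0 < R) (r : Fin n → ℕ)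
    (hrpos : ∀ i, 0 < r i) (hrR : ∀ i, r i ≤ R)
    (pk : (Fin n → Fin d) → Fin d → ℝ) (hRM : R ≤ M) (μ0 : (Fin R → Fin d) → ℝ)
    (S S' : Finset ℕ) (hS : ∀ s ∈ S, 1 ≤ s ∧ s ≤ M)
    (l : ℕ) (hMl : M ≤ l) (hl : l + M < L)
    (w : (Fin d × ({s // s ∈ S} → Fin d)) × (Fin d × ({s // s ∈ S'} → Fin d))) :
    jnt hd r pk R L μ0 S S' l w = ∑ z, μ0 z * iterW r pk (l + 1 - R) R (fun x => indW S' l w.2 x *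
      (backQ (windowMatrix d n R hR r hrpos pk))^[L - M + R - (l + 1)] (fE hd r pk R M S w.1)
        (stN R (l + 1) x)) (extN hd z) := by
  unfold jnt
  refine Finset.sum_congr rfl fun z _ => ?_
  rw [show L + 1 - R = (l + 1 - R) + (L - l) by omega, iterW_add]
  congr 2
  funext x
  rw [show R + (l + 1 - R) = l + 1 by omega]
  rw [iterW_mul r pk _ _ _ _ (indW_local S' l w.2)]
  rw [iterW_ind hd hR r hrpos hrR pk hRM S hS w.1 (l + 1) (L - M + R - (l + 1)) (L - l) L
    (by omega) (by omega) (by omega)]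

/-- Bound for a single good index -/
theorem good_bound {d n R M L : ℕ} (hd : 0 < d) (hR : 0 < R) (r : Fin n → ℕ)
    (hrpos : ∀ i, 0 < r i) (hrR : ∀ i, r i ≤ R)
    (pk : (Fin n → Fin d) → Fin d → ℝ)
    (hpk0 : ∀ Y e, 0 ≤ pk Y e) (hpk1 : ∀ Y, ∑ e, pk Y e = 1) (hRM : R ≤ M)
    (μ0 : (Fin R → Fin d) → ℝ) (hμ00 : ∀ Z, 0 ≤ μ0 Z) (hμ01 : ∑ Z, μ0 Z = 1)
    (μ : (Fin R → Fin d) → ℝ) (lam : ℝ) (hs : Setup (windowMatrix d n R hR r hrpos pk) μ lam)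
    (S S' : Finset ℕ) (hS : ∀ s ∈ S, 1 ≤ s ∧ s ≤ M) (hS' : ∀ s ∈ S', 1 ≤ s ∧ s ≤ M)
    (m : ℝ) (hm0 : 0 < m) (hm : ∀ E, m ≤ ∑ z, μ z * fE hd r pk R M S E z)
    (l : ℕ) (hMl : M ≤ l) (hl : l + M < L) :
    ∑ w : (Fin d × ({s // s ∈ S} → Fin d)) × (Fin d × ({s // s ∈ S'} → Fin d)),
      |jnt hd r pk R L μ0 S S' l w -
        (∑ z, μ z * fE hd r pk R M S w.1 z) * (∑ z, μ z * fE hd r pk R M S' w.2 z)| ≤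
      lam ^ (L - M + R - (l + 1)) * (Real.sqrt (chiSq μ0 μ + 1) / Real.sqrt m) +
        lam ^ (l - M) * Real.sqrt (chiSq μ0 μ + 1) := by
  set P := windowMatrix d n R hR r hrpos pk with hP
  set k := L - M + R - (l + 1) with hk
  set C := Real.sqrt (chiSq μ0 μ + 1) with hC
  set ν : Fin d × ({s // s ∈ S} → Fin d) → ℝ := fun E => ∑ z, μ z * fE hd r pk R M S E z with hν
  set ν' : Fin d × ({s // s ∈ S'} → Fin d) → ℝ := fun E => ∑ z, μ z * fE hd r pk R M S' E z with hν'
  set p' : Fin d × ({s // s ∈ S'} → Fin d) → ℝ := fun E' =>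
    ∑ z, μ0 z * iterW r pk (l + 1 - R) R (indW S' l E') (extN hd z) with hp'
  have hνsum : ∑ E, ν E = 1 := by
    rw [hν, Finset.sum_comm, ← hs.one]
    refine Finset.sum_congr rfl fun z _ => ?_
    rw [← Finset.mul_sum, fE_sum hd r pk hpk1, mul_one]
  have hνpos : ∀ E, 0 < ν E := fun E => hm0.trans_le (hm E)
  -- marginal part
  have hmarg : ∑ E', |p' E' - ν' E'| ≤ lam ^ (l - M) * C := by
    have h1 : ∀ E', p' E' - ν' E' =
        ∑ z, ((fwdP P)^[l - M] μ0 z - μ z) * fE hd r pk R M S' E' z := by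
      intro E'
      simp only [sub_mul, Finset.sum_sub_distrib]
      rw [← duality]
      congr 1
      refine Finset.sum_congr rfl fun z _ => ?_
      rw [iterW_ind hd hR r hrpos hrR pk hRM S' hS' E' R (l - M) (l + 1 - R) l
        le_rfl (by omega) (by omega), stN_extN]
    calc ∑ E', |p' E' - ν' E'|
        ≤ ∑ E', ∑ z, |(fwdP P)^[l - M] μ0 z - μ z| * fE hd r pk R M S' E' z := by
          refine Finset.sum_le_sum fun E' _ => ?_
          rw [h1]
          refine (Finset.abs_sum_le_sum_abs _ _).trans (le_of_eq ?_)
          refine Finset.sum_congr rfl fun z _ => ?_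
          rw [abs_mul, abs_of_nonneg (fE_nonneg hd r pk hpk0 hpk1 R M S' E' z)]
      _ = ∑ z, |(fwdP P)^[l - M] μ0 z - μ z| := by
          rw [Finset.sum_comm]
          refine Finset.sum_congr rfl fun z _ => ?_
          rw [← Finset.mul_sum, fE_sum hd r pk hpk1, mul_one]
      _ ≤ _ := l1_le hs _ _ hμ01
  -- conditional part
  have hcond : ∀ E, ∑ E', |jnt hd r pk R L μ0 S S' l (E, E') - ν E * p' E'| ≤
      lam ^ k * (C / Real.sqrt m) * ν E := by
    intro E
    set g : (Fin R → Fin d) → ℝ := fun z => fE hd r pk R M S E z - ν E with hg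
    have hg0 : ∑ z, μ z * g z = 0 := by
      simp only [hg, mul_sub, Finset.sum_sub_distrib, ← Finset.sum_mul, hs.one, one_mul]
      exact sub_self _
    have hg2 : ∑ z, μ z * g z ^ 2 ≤ ν E := by
      have e1 : ∑ z, μ z * g z ^ 2 = ∑ z, μ z * fE hd r pk R M S E z ^ 2 - ν E ^ 2 := by
        have : ∀ z, μ z * g z ^ 2 = μ z * fE hd r pk R M S E z ^ 2
            - 2 * ν E * (μ z * fE hd r pk R M S E z) + ν E ^ 2 * μ z := by
          intro z; simp only [hg]; ring
        rw [Finset.sum_congr rfl fun z _ => this z, Finset.sum_add_distrib,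
          Finset.sum_sub_distrib, ← Finset.mul_sum, ← Finset.mul_sum, hs.one]
        show _ - 2 * ν E * ν E + _ = _
        ring
      have e2 : ∑ z, μ z * fE hd r pk R M S E z ^ 2 ≤ ν E := by
        refine Finset.sum_le_sum fun z _ => mul_le_mul_of_nonneg_left ?_ (hs.pos z).le
        have a := fE_nonneg hd r pk hpk0 hpk1 R M S E z
        have b := fE_le_one hd r pk hpk0 hpk1 R M S E z
        nlinarith
      rw [e1]
      linarith [sq_nonneg (ν E)]
    have hdiff : ∀ E', jnt hd r pk R L μ0 S S' l (E, E') - ν E * p' E' =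
        ∑ z, μ0 z * iterW r pk (l + 1 - R) R (fun x => indW S' l E' x *
          (backQ P)^[k] g (stN R (l + 1) x)) (extN hd z) := by
      intro E'
      rw [jnt_split hd hR r hrpos hrR pk hRM μ0 S S' hS l hMl hl]
      simp only [hp', Finset.mul_sum]
      rw [← Finset.sum_sub_distrib]
      refine Finset.sum_congr rfl fun z _ => ?_
      have e : (fun x : ℕ → Fin d => indW S' l E' x * (backQ P)^[k] g (stN R (l + 1) x)) =
          fun x => indW S' l E' x * (backQ P)^[k] (fE hd r pk R M S E) (stN R (l + 1) x) -
            (fun _ => ν E) x * indW S' l E' x := by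
        funext x
        rw [hg, back_sub_const P hs.col]
        ring
      rw [e, iterW_sub, iterW_mul r pk _ _ (fun _ => ν E) _ (fun _ _ _ => rfl)]
      ring
    have hstep : ∑ E', |jnt hd r pk R L μ0 S S' l (E, E') - ν E * p' E'| ≤
        ∑ z, (fwdP P)^[l + 1 - R] μ0 z * |(backQ P)^[k] g z| := by
      have habs : ∀ E', |jnt hd r pk R L μ0 S S' l (E, E') - ν E * p' E'| ≤
          ∑ z, μ0 z * iterW r pk (l + 1 - R) R (fun x => indW S' l E' x *
            |(backQ P)^[k] g (stN R (l + 1) x)|) (extN hd z) := by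
        intro E'
        rw [hdiff]
        refine (Finset.abs_sum_le_sum_abs _ _).trans (Finset.sum_le_sum fun z _ => ?_)
        rw [abs_mul, abs_of_nonneg (hμ00 z)]
        refine mul_le_mul_of_nonneg_left ?_ (hμ00 z)
        rw [abs_le]
        constructor
        · have h1 := iterW_mono r pk hpk0 (l + 1 - R) R
            (fun x => (fun _ => (0 : ℝ)) x - indW S' l E' x * |(backQ P)^[k] g (stN R (l + 1) x)|)
            (fun x => indW S' l E' x * (backQ P)^[k] g (stN R (l + 1) x))
            (fun x => by
              have := mul_le_mul_of_nonneg_left (neg_abs_le ((backQ P)^[k] g (stN R (l + 1) x)))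
                (indW_nonneg S' l E' x)
              simp only
              linarith) (extN hd z)
          rw [iterW_sub, iterW_const r pk hpk1] at h1
          linarith
        · exact iterW_mono r pk hpk0 _ _ _ _ (fun x => mul_le_mul_of_nonneg_left (le_abs_self _)
            (indW_nonneg S' l E' x)) _
      refine (Finset.sum_le_sum fun E' _ => habs E').trans (le_of_eq ?_)
      rw [Finset.sum_comm, ← duality P (l + 1 - R) μ0 (fun z => |(backQ P)^[k] g z|)]
      refine Finset.sum_congr rfl fun z _ => ?_
      rw [← Finset.mul_sum, ← iterW_sum]
      simp only [← Finset.sum_mul, indW_sum, one_mul]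
      have := iterW_state d n R hR r hrpos hrR pk (fun z => |(backQ P)^[k] g z|) (l + 1 - R) R
        le_rfl (extN hd z)
      rw [show R + (l + 1 - R) = l + 1 by omega, stN_extN] at this
      rw [this]
    refine hstep.trans ((corr_le hs (l + 1 - R) k μ0 hμ01 g hg0).trans ?_)
    have hlk : 0 ≤ lam ^ k := pow_nonneg hs.lam0 k
    have hsm : 0 < Real.sqrt m := Real.sqrt_pos.mpr hm0
    have h1 : Real.sqrt (∑ z, μ z * g z ^ 2) ≤ ν E / Real.sqrt m := by
      refine (Real.sqrt_le_sqrt hg2).trans ?_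
      rw [le_div_iff₀ hsm]
      calc Real.sqrt (ν E) * Real.sqrt m ≤ Real.sqrt (ν E) * Real.sqrt (ν E) :=
            mul_le_mul_of_nonneg_left (Real.sqrt_le_sqrt (hm E)) (Real.sqrt_nonneg _)
        _ = ν E := Real.mul_self_sqrt (hνpos E).le
    calc C * lam ^ k * Real.sqrt (∑ z, μ z * g z ^ 2) ≤ C * lam ^ k * (ν E / Real.sqrt m) :=
          mul_le_mul_of_nonneg_left h1 (mul_nonneg (Real.sqrt_nonneg _) hlk)
      _ = _ := by ring
  calc ∑ w : (Fin d × ({s // s ∈ S} → Fin d)) × (Fin d × ({s // s ∈ S'} → Fin d)),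
      |jnt hd r pk R L μ0 S S' l w - ν w.1 * ν' w.2|
      ≤ ∑ w : (Fin d × ({s // s ∈ S} → Fin d)) × (Fin d × ({s // s ∈ S'} → Fin d)),
        (|jnt hd r pk R L μ0 S S' l w - ν w.1 * p' w.2| + ν w.1 * |p' w.2 - ν' w.2|) := by
        refine Finset.sum_le_sum fun w _ => ?_
        rw [← abs_of_nonneg (hνpos w.1).le, ← abs_mul, abs_of_nonneg (hνpos w.1).le]
        refine le_trans (le_of_eq ?_) (abs_add_le _ _)
        congr 1; ring
    _ = ∑ E, ∑ E', |jnt hd r pk R L μ0 S S' l (E, E') - ν E * p' E'| +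
        (∑ E, ν E) * ∑ E', |p' E' - ν' E'| := by
        rw [Finset.sum_add_distrib, Finset.sum_mul_sum]
        exact congrArg₂ (· + ·) (Fintype.sum_prod_type _) (Fintype.sum_prod_type _)
    _ ≤ ∑ E, lam ^ k * (C / Real.sqrt m) * ν E + 1 * (lam ^ (l - M) * C) := by
        rw [hνsum]
        exact add_le_add (Finset.sum_le_sum fun E _ => hcond E)
          (mul_le_mul_of_nonneg_left hmarg zero_le_one)
    _ = _ := by rw [← Finset.mul_sum, hνsum]; ring

theorem geom_bound (lam : ℝ) (h0 : 0 ≤ lam) (h1 : lam < 1) (N : ℕ) :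
    ∑ i ∈ Finset.range N, lam ^ i ≤ 1 / (1 - lam) := by
  have h : 0 < 1 - lam := by linarith
  rw [le_div_iff₀ h]
  have := geom_sum_mul_neg lam N
  rw [this]
  have := pow_nonneg h0 N
  linarith

/-- Second-order convergence: the averaged joint law
`p̂(E,E') = (L−M)⁻¹ Σ_{l=M+1}^L p(Y_{L+1}=E, Y'_l=E')` is within TV distance
`2M/L + 4√(D₀+1)/(L(1−λ)√(min ν))` of the product `ν ⊗ ν'` of stationary window marginals. -/
theorem statement6
    (d n R M L : ℕ) (hd : 0 < d) (hn : 0 < n) (hR : 0 < R)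
    (r : Fin n → ℕ) (hrpos : ∀ i, 0 < r i) (hrmono : StrictMono r)
    (hrR : ∀ i, r i ≤ R) (hRmax : ∃ i, r i = R)
    (pk : (Fin n → Fin d) → Fin d → ℝ)
    (hpk0 : ∀ Y e, 0 ≤ pk Y e) (hpk1 : ∀ Y, ∑ e, pk Y e = 1)
    (μ0 : (Fin R → Fin d) → ℝ) (hμ00 : ∀ Z, 0 ≤ μ0 Z) (hμ01 : ∑ Z, μ0 Z = 1)
    (μ : (Fin R → Fin d) → ℝ) (hμpos : ∀ Z, 0 < μ Z) (hμ1 : ∑ Z, μ Z = 1)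
    (hstat : ∀ Z', μ Z' = ∑ Z, windowMatrix d n R hR r hrpos pk Z' Z * μ Z)
    (lam : ℝ) (hlam0 : 0 ≤ lam) (hlam1 : lam < 1)
    (hop : ∀ v : (Fin R → Fin d) → ℝ,
      Real.sqrt (∑ Z', Matrix.mulVec (specA d n R hR r hrpos pk μ) v Z' ^ 2)
        ≤ lam * Real.sqrt (∑ Z, v Z ^ 2))
    (hRM : R ≤ M) (hML : 2 * M ≤ L)
    (S S' : Finset ℕ) (hS : ∀ s ∈ S, 1 ≤ s ∧ s ≤ M) (hS' : ∀ s ∈ S', 1 ≤ s ∧ s ≤ M)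
    (m : ℝ) (hm0 : 0 < m)
    (hmle : ∀ w, m ≤ windowLaw d (M + 1) S (ngramProb d n R (M + 1) r pk μ (by omega)) M
        (Nat.lt_succ_self M) w)
    (hmmem : ∃ w, windowLaw d (M + 1) S (ngramProb d n R (M + 1) r pk μ (by omega)) M
        (Nat.lt_succ_self M) w = m) :
    tvDist
        (fun w : (Fin d × ({s // s ∈ S} → Fin d)) × (Fin d × ({s // s ∈ S'} → Fin d)) =>
          (∑ l ∈ (Finset.Ico M L).attach,
              ∑ x : Fin (L + 1) → Fin d,
                if window d (L + 1) S x L (Nat.lt_succ_self L) = w.1 ∧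
                    window d (L + 1) S' x l.1 (icoLtSucc l) = w.2 then
                  ngramProb d n R (L + 1) r pk μ0 (by omega) x
                else 0) /
            ((L : ℝ) - M))
        (fun w =>
          windowLaw d (M + 1) S (ngramProb d n R (M + 1) r pk μ (by omega)) M
              (Nat.lt_succ_self M) w.1 *
            windowLaw d (M + 1) S' (ngramProb d n R (M + 1) r pk μ (by omega)) M
              (Nat.lt_succ_self M) w.2)
      ≤ 2 * M / L + 4 * Real.sqrt (chiSq μ0 μ + 1) / (L * (1 - lam) * Real.sqrt m) := by

  have hs : Setup (windowMatrix d n R hR r hrpos pk) μ lam := by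
    refine ⟨hμpos, hμ1, ?_, ?_, hlam0, hlam1, ?_⟩
    · funext Z'
      exact (hstat Z').symm
    · intro Z
      have := backQ_window d n R hR r hrpos pk (fun _ => 1) Z
      simp only [backQ, mul_one, hpk1] at this
      exact this
    · exact hop_sq _ lam hop
  have hν : ∀ (S : Finset ℕ) w, windowLaw d (M + 1) S (ngramProb d n R (M + 1) r pk μ (by omega)) M
        (Nat.lt_succ_self M) w = ∑ z, μ z * fE hd r pk R M S w z := fun S w =>
    windowLaw_eq hd hR r hrpos pk μ (by omega) S w
  simp only [hν] at hmle
  simp only [hν, jnt_eq hd hR r hrpos pk μ0 (by omega : R ≤ L + 1)]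
  have hνsum : ∀ S : Finset ℕ, ∑ E, ∑ z, μ z * fE hd r pk R M S E z = 1 := by
    intro S
    rw [Finset.sum_comm, ← hμ1]
    refine Finset.sum_congr rfl fun z _ => ?_
    rw [← Finset.mul_sum, fE_sum hd r pk hpk1, mul_one]
  have hν0 : ∀ (S : Finset ℕ) E, 0 ≤ ∑ z, μ z * fE hd r pk R M S E z := fun S E =>
    Finset.sum_nonneg fun z _ =>
      mul_nonneg (hμpos z).le (fE_nonneg hd r pk hpk0 hpk1 R M S E z)
  set C := Real.sqrt (chiSq μ0 μ + 1) with hC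
  have hC0 : 0 ≤ C := Real.sqrt_nonneg _
  have hsm : 0 < Real.sqrt m := Real.sqrt_pos.mpr hm0
  have hm1 : m ≤ 1 := by
    obtain ⟨w, _⟩ := hmmem
    refine (hmle w).trans ?_
    rw [← hνsum S]
    exact Finset.single_le_sum (f := fun E => ∑ z, μ z * fE hd r pk R M S E z)
      (fun E _ => hν0 S E) (Finset.mem_univ w)
  have hsm1 : Real.sqrt m ≤ 1 := Real.sqrt_le_one.mpr hm1
  set Q : (Fin d × ({s // s ∈ S} → Fin d)) × (Fin d × ({s // s ∈ S'} → Fin d)) → ℝ :=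
    fun w => (∑ z, μ z * fE hd r pk R M S w.1 z) * ∑ z, μ z * fE hd r pk R M S' w.2 z with hQ
  have hQ0 : ∀ w, 0 ≤ Q w := fun w => mul_nonneg (hν0 S w.1) (hν0 S' w.2)
  have hQ1 : ∑ w, Q w = 1 := by
    rw [Fintype.sum_prod_type]
    simp only [hQ]
    rw [← Finset.sum_mul_sum, hνsum, hνsum, one_mul]
  set B : ℕ → ℝ := fun l => ∑ w, |jnt hd r pk R L μ0 S S' l w - Q w| with hB
  have hbad : ∀ l, B l ≤ 2 := by
    intro l
    calc B l ≤ ∑ w, (jnt hd r pk R L μ0 S S' l w + Q w) := by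
          refine Finset.sum_le_sum fun w _ => ?_
          have h1 := jnt_nonneg hd r pk hpk0 hpk1 R L μ0 hμ00 S S' l w
          have h2 := hQ0 w
          rw [abs_le]; constructor <;> linarith
      _ = 2 := by
          rw [Finset.sum_add_distrib, jnt_sum hd r pk hpk1 R L μ0 hμ01, hQ1]; norm_num
  have hgood : ∀ l, M ≤ l → l + M < L → B l ≤
      lam ^ (L - M + R - (l + 1)) * (C / Real.sqrt m) + lam ^ (l - M) * (C / Real.sqrt m) := by
    intro l h1 h2
    refine (good_bound hd hR r hrpos hrR pk hpk0 hpk1 hRM μ0 hμ00 hμ01 μ lam hs S S' hS hS' m hm0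
      hmle l h1 h2).trans ?_
    have : C ≤ C / Real.sqrt m := by
      rw [le_div_iff₀ hsm]
      nlinarith
    have h3 := mul_le_mul_of_nonneg_left this (pow_nonneg hlam0 (l - M))
    linarith
  have h1lam : 0 < 1 - lam := by linarith
  have hCm : 0 ≤ C / Real.sqrt m := by positivity
  have hsum : ∑ l ∈ Finset.Ico M L, B l ≤ 2 * M + 2 * (C / Real.sqrt m) / (1 - lam) := by
    rw [← Finset.sum_Ico_consecutive B (show M ≤ L - M by omega) (show L - M ≤ L by omega)]
    have e1 : ∑ l ∈ Finset.Ico (L - M) L, B l ≤ 2 * M := by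
      refine (Finset.sum_le_sum fun l _ => hbad l).trans (le_of_eq ?_)
      rw [Finset.sum_const, Nat.card_Ico, show L - (L - M) = M by omega, nsmul_eq_mul]
      ring
    have e2 : ∑ l ∈ Finset.Ico M (L - M), B l ≤ 2 * (C / Real.sqrt m) / (1 - lam) := by
      rw [Finset.sum_Ico_eq_sum_range]
      calc ∑ i ∈ Finset.range (L - M - M), B (M + i)
          ≤ ∑ i ∈ Finset.range (L - M - M), (lam ^ (L - M - M - 1 - i) * (C / Real.sqrt m) +
            lam ^ i * (C / Real.sqrt m)) := by
            refine Finset.sum_le_sum fun i hi => ?_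
            rw [Finset.mem_range] at hi
            refine (hgood (M + i) (by omega) (by omega)).trans ?_
            rw [show M + i - M = i by omega]
            have : lam ^ (L - M + R - (M + i + 1)) ≤ lam ^ (L - M - M - 1 - i) :=
              pow_le_pow_of_le_one hlam0 hlam1.le (by omega)
            have := mul_le_mul_of_nonneg_right this hCm
            linarith
        _ = 2 * (C / Real.sqrt m) * ∑ i ∈ Finset.range (L - M - M), lam ^ i := by
            rw [Finset.sum_add_distrib, ← Finset.sum_mul, ← Finset.sum_mul,
              Finset.sum_range_reflect (fun i => lam ^ i)]
            ring
        _ ≤ 2 * (C / Real.sqrt m) * (1 / (1 - lam)) :=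
            mul_le_mul_of_nonneg_left (geom_bound lam hlam0 hlam1 _) (by positivity)
        _ = _ := by ring
    linarith
  have hLM : (2 : ℝ) * M ≤ L := by exact_mod_cast hML
  have hM0 : (1 : ℝ) ≤ M := by exact_mod_cast (by omega : 1 ≤ M)
  have hL0 : (0 : ℝ) < L := by linarith
  have hLM0 : (0 : ℝ) < L - M := by linarith
  have htv : ∑ w, |(∑ l ∈ (Finset.Ico M L).attach, jnt hd r pk R L μ0 S S' l.1 w) / ((L : ℝ) - M)
      - Q w| ≤ (∑ l ∈ Finset.Ico M L, B l) / ((L : ℝ) - M) := by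
    rw [hB, Finset.sum_comm, Finset.sum_div]
    refine Finset.sum_le_sum fun w _ => ?_
    rw [Finset.sum_attach (Finset.Ico M L) (fun l => jnt hd r pk R L μ0 S S' l w)]
    have : (∑ l ∈ Finset.Ico M L, jnt hd r pk R L μ0 S S' l w) / ((L : ℝ) - M) - Q w =
        (∑ l ∈ Finset.Ico M L, (jnt hd r pk R L μ0 S S' l w - Q w)) / ((L : ℝ) - M) := by
      rw [Finset.sum_sub_distrib, Finset.sum_const, Nat.card_Ico, nsmul_eq_mul,
        Nat.cast_sub (by omega)]
      field_simp
    rw [this, abs_div, abs_of_pos hLM0]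
    exact div_le_div_of_nonneg_right (Finset.abs_sum_le_sum_abs _ _) hLM0.le
  unfold tvDist
  have hX : 0 ≤ 2 * M + 2 * (C / Real.sqrt m) / (1 - lam) := by positivity
  calc _ ≤ (∑ l ∈ Finset.Ico M L, B l) / ((L : ℝ) - M) / 2 :=
        div_le_div_of_nonneg_right htv (by norm_num)
    _ ≤ (2 * M + 2 * (C / Real.sqrt m) / (1 - lam)) / ((L : ℝ) - M) / 2 := by gcongr
    _ = (2 * M + 2 * (C / Real.sqrt m) / (1 - lam)) / (2 * ((L : ℝ) - M)) := by
        rw [div_div]; congr 1; ring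
    _ ≤ (2 * M + 2 * (C / Real.sqrt m) / (1 - lam)) / L :=
        div_le_div_of_nonneg_left hX hL0 (by linarith)
    _ = 2 * M / L + 2 * C / (L * (1 - lam) * Real.sqrt m) := by
        field_simp
    _ ≤ _ := by
        gcongr
        norm_num
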